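/- For all real numbers c and c' with c ≥ c' > 1, one has g(c + 1, c') ≤ g(c, 0) + g(c', 0) + φ + 1, where g(x,y) = φ·max(x,y) - φ + max(max(x,y) - φ³, min(x,y)) and φ = (1+√5)/2. -/

import Mathlib

/-- The golden ratio `φ = (1 + √5)/2`. -/
noncomputable def φ : ℝ := (1 + Real.sqrt 5) / 2

/-- The auxiliary function `g(x,y) = φ·max(x,y) - φ + max(max(x,y) - φ³, min(x,y))`. -/
noncomputable def g (x y : ℝ) : ℝ := φ * max x y - φ + max (max x y - φ ^ 3) (min x y)

theorem one_lt_φ : 1 < φ :=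
  Real.one_lt_goldenRatio

theorem g_comm (x y : ℝ) : g x y = g y x := by
  simp only [g, max_comm x y, min_comm x y]

theorem g_of_le {x y : ℝ} (h : y ≤ x) : g x y = φ * x - φ + max (x - φ ^ 3) y := by
  rw [g, max_eq_left h, min_eq_right h]

theorem le_g_of_le_max {r x y : ℝ} (hr : r ≤ max x y) : x + y + (φ - 1) * r - φ ≤ g x y :=
  calc
    x + y + (φ - 1) * r - φ ≤ x + y + (φ - 1) * max x y - φ := by
      gcongr
      exact sub_nonneg.mpr one_lt_φ.le
    _ = φ * max x y - φ + min x y := by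
      rw [← max_add_min x y]
      ring
    _ ≤ g x y := by
      unfold g
      gcongr
      exact le_max_right _ _

-- Since `t ≤ y`, the summand `y` absorbs the shift by `t` inside the outer maximum of `g`.
theorem g_add_left_le {x t y : ℝ} (hx : 0 ≤ x) (hty : t ≤ y) (hy : y ≤ x + t) :
    g (x + t) y ≤ g x 0 + φ * t + y := by
  have max_le_add : max (x + t - φ ^ 3) y ≤ max (x - φ ^ 3) 0 + y := by
    apply max_le
    · linarith [le_max_left (x - φ ^ 3) 0]
    · exact le_add_of_nonneg_left (le_max_right _ _)
  rw [g_of_le hy, g_of_le hx]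
  linarith

theorem g_join_blue_general {c c' : ℝ} (hc : -1 ≤ c) (hc' : 1 ≤ c') :
    g (c + 1) c' ≤ g c 0 + g c' 0 + φ + 1 := by
  rcases le_total c' (c + 1) with h | h
  · have upper : g (c + 1) c' ≤ g c 0 + φ * 1 + c' := g_add_left_le (by linarith) hc' h
    have lower : c' + 0 + (φ - 1) * 1 - φ ≤ g c' 0 := le_g_of_le_max (le_max_of_le_left hc')
    linarith
  · have upper : g (c' + 0) (c + 1) ≤ g c' 0 + φ * 0 + (c + 1) :=
      g_add_left_le (by linarith) (by linarith) (by linarith)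
    have lower : c + 0 + (φ - 1) * 0 - φ ≤ g c 0 := le_g_of_le_max (le_max_right c 0)
    rw [add_zero, g_comm] at upper
    linarith

/-- If `c ≥ c' > 1`, then `g(c+1, c') ≤ g(c,0) + g(c',0) + φ + 1`. -/
theorem g_join_blue (c c' : ℝ) (h : c' ≤ c) (h' : 1 < c') :
    g (c + 1) c' ≤ g c 0 + g c' 0 + φ + 1 :=
  g_join_blue_general (by linarith) h'.le
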